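/- For every τ in the complex upper half-plane, (1 + c(τ/2))·c(−1/τ) = 1/2 − c(τ/2); equivalently c(−1/τ) = (1/2 − c(τ/2))/(1 + c(τ/2)). -/

import Mathlib

open Complex

/-- The nome `q = exp(2πiτ)`. -/
noncomputable def nome (τ : ℂ) : ℂ := Complex.exp (2 * Real.pi * I * τ)

/-- Ramanujan's cubic continued fraction, as an infinite product:
`c(τ) = q^{1/3} ∏_{n≥1} (1-q^{6n-1})(1-q^{6n-5})/(1-q^{6n-3})²`. -/
noncomputable def c (τ : ℂ) : ℂ :=
  Complex.exp (2 * Real.pi * I * τ / 3) *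
    ∏' n : ℕ,
      ((1 - nome τ ^ (6 * (n + 1) - 1)) * (1 - nome τ ^ (6 * (n + 1) - 5)) /
        (1 - nome τ ^ (6 * (n + 1) - 3)) ^ 2)

/-! Write `q = exp (πiτ / 3)`, `C = c (τ / 2)` and `E(q) = (q; q)_∞`. By the Jacobi triple product,
Ramanujan's theta functions `φ(-q) = ∑ (-1) ^ j q ^ (j ^ 2)` and `ψ(q) = ∑ q ^ (j (j + 1) / 2)`
(over `j ∈ ℤ` and `j ≥ 0` respectively) are `E(q)² / E(q²)` and `E(q²)² / E(q)`. Sorting their terms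
by the residue of `j` mod 3 and evaluating the pieces by the triple product again shows that
`1 - 2C` is a multiple of `φ(-q)` and `1 + C` a multiple of `ψ(q)`, both by explicit quotients of
Euler functions. Their ratio `(1 - 2C) / (1 + C)` is therefore an eta quotient, which the modular
transformation of `η` identifies with `2 c(-1/τ)`. -/

open Filter Finset Topology

section FiniteTripleProduct

variable {𝕜 : Type*} [Field 𝕜] {q : 𝕜}

/-- The reciprocal `1 / (q; q)ₙ` of a finite q-Pochhammer symbol, extended by zero to negative `n`,
so that the recurrence `invQPochhammer_sub_one` holds for all integers. -/
noncomputable def invQPochhammer (q : 𝕜) : ℤ → 𝕜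
  | .ofNat n => (∏ k ∈ range n, (1 - q ^ (k + 1)))⁻¹
  | .negSucc _ => 0

lemma invQPochhammer_natCast (q : 𝕜) (n : ℕ) :
    invQPochhammer q n = (∏ k ∈ range n, (1 - q ^ (k + 1)))⁻¹ := rfl

lemma invQPochhammer_of_neg (q : 𝕜) {n : ℤ} (hn : n < 0) : invQPochhammer q n = 0 := by
  obtain ⟨m, rfl⟩ := Int.eq_negSucc_of_lt_zero hn
  rfl

lemma invQPochhammer_sub_one (hq : ∀ k : ℕ, q ^ (k + 1) ≠ 1) (n : ℤ) :
    invQPochhammer q (n - 1) = invQPochhammer q n * (1 - q ^ n) := by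
  rcases lt_trichotomy n 0 with hn | rfl | hn
  · rw [invQPochhammer_of_neg q hn, invQPochhammer_of_neg q (by lia), zero_mul]
  · simp [invQPochhammer_of_neg]
  · obtain ⟨m, rfl⟩ := Int.eq_succ_of_zero_lt hn
    have hm : 1 - q ^ (m + 1) ≠ 0 := sub_ne_zero.mpr (hq m).symm
    rw [add_sub_cancel_right, ← Nat.cast_succ, zpow_natCast, invQPochhammer_natCast,
      invQPochhammer_natCast, prod_range_succ, mul_inv, inv_mul_cancel_right₀ hm]

/-- The q-binomial coefficient with upper index `2N` and lower index `N + j`, which vanishes for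
`|j| > N`. Centring the lower index makes it the `j`-th coefficient in the finite triple product. -/
noncomputable def centralQBinom (q : 𝕜) (N : ℕ) (j : ℤ) : 𝕜 :=
  (∏ k ∈ range (2 * N), (1 - q ^ (k + 1))) * (invQPochhammer q (N + j) * invQPochhammer q (N - j))

lemma centralQBinom_zero_left (q : 𝕜) (j : ℤ) :
    centralQBinom q 0 j = if j = 0 then 1 else 0 := by
  rcases lt_trichotomy j 0 with hj | rfl | hj
  · simp [centralQBinom, invQPochhammer_of_neg q hj, hj.ne]
  · have h : invQPochhammer q 0 = 1 := by simpa using invQPochhammer_natCast q 0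
    simp [centralQBinom, h]
  · simp [centralQBinom, invQPochhammer_of_neg q (neg_neg_of_pos hj), hj.ne']

lemma centralQBinom_succ (hq : ∀ k : ℕ, q ^ (k + 1) ≠ 1) (hq0 : q ≠ 0) (N : ℕ) (j : ℤ) :
    centralQBinom q (N + 1) j = (1 + q ^ (2 * N + 1)) * centralQBinom q N j +
      q ^ (N + 1 - j) * centralQBinom q N (j - 1) +
      q ^ (N + 1 + j) * centralQBinom q N (j + 1) := by
  have lower {m n : ℤ} (h : n = m - 1) :
      invQPochhammer q n = invQPochhammer q m * (1 - q ^ m) := by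
    rw [h, invQPochhammer_sub_one hq]
  simp only [centralQBinom]
  rw [lower (show (N + (j - 1) : ℤ) = N + j - 1 by ring),
    lower (show (N - (j + 1) : ℤ) = N - j - 1 by ring),
    lower (show (N + j : ℤ) = (N + 1 : ℕ) + j - 1 by push_cast; ring),
    lower (show (N - j : ℤ) = (N + 1 : ℕ) - j - 1 by push_cast; ring),
    show (N + (j + 1) : ℤ) = (N + 1 : ℕ) + j by push_cast; ring,
    show (N - (j - 1) : ℤ) = (N + 1 : ℕ) - j by push_cast; ring,
    show 2 * (N + 1) = 2 * N + 1 + 1 by ring, prod_range_succ, prod_range_succ]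
  simp only [Nat.cast_add, Nat.cast_one, zpow_add₀ hq0, zpow_sub₀ hq0, zpow_natCast, zpow_one]
  field_simp
  ring

lemma zpow_sub_one_sq {x : 𝕜} (hx : x ≠ 0) (j : ℤ) :
    x ^ (j - 1) ^ 2 = x ^ j ^ 2 * x / (x ^ 2) ^ j := by
  rw [← zpow_natCast, ← zpow_mul, ← zpow_add_one₀ hx, ← zpow_sub₀ hx]
  congr 1; push_cast; ring

lemma zpow_add_one_sq {x : 𝕜} (hx : x ≠ 0) (j : ℤ) :
    x ^ (j + 1) ^ 2 = x ^ j ^ 2 * x * (x ^ 2) ^ j := by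
  rw [← zpow_natCast, ← zpow_mul, ← zpow_add_one₀ hx, ← zpow_add₀ hx]
  congr 1; push_cast; ring

theorem hasSum_centralQBinom [TopologicalSpace 𝕜] [IsTopologicalSemiring 𝕜] {x z : 𝕜}
    (hx : ∀ k : ℕ, (x ^ 2) ^ (k + 1) ≠ 1) (hx0 : x ≠ 0) (hz : z ≠ 0) (N : ℕ) :
    HasSum (fun j : ℤ ↦ centralQBinom (x ^ 2) N j * (x ^ j ^ 2 * z ^ j))
      (∏ k ∈ range N, (1 + x * z * (x ^ 2) ^ k) * (1 + x * z⁻¹ * (x ^ 2) ^ k)) := by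
  induction N with
  | zero =>
    convert! hasSum_ite_eq (0 : ℤ) (1 : 𝕜) using 2 with j
    rw [centralQBinom_zero_left]
    split_ifs with hj <;> simp [hj]
  | succ N ih =>
    have hmid := ih.mul_left (1 + (x ^ 2) ^ (2 * N + 1))
    have hright := ((Equiv.subRight (1 : ℤ)).hasSum_iff.mpr ih).mul_left (x * z * (x ^ 2) ^ N)
    have hleft := ((Equiv.addRight (1 : ℤ)).hasSum_iff.mpr ih).mul_left (x * z⁻¹ * (x ^ 2) ^ N)
    convert! (hmid.add hright).add hleft using 1
    · ext j
      simp only [Function.comp_apply, Equiv.subRight_apply, Equiv.coe_addRight]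
      have hx2 : x ^ 2 ≠ 0 := pow_ne_zero 2 hx0
      rw [centralQBinom_succ hx hx2, zpow_sub_one_sq hx0, zpow_add_one_sq hx0, zpow_sub_one₀ hz,
        zpow_add_one₀ hz, zpow_add₀ hx2, zpow_sub₀ hx2, ← Nat.cast_succ, zpow_natCast, pow_succ _ N]
      field_simp
    · rw [prod_range_succ]
      field_simp
      ring

end FiniteTripleProduct

section QPochhammer

variable {𝕜 : Type*} [NormedField 𝕜] {q : 𝕜}

/-- The infinite q-Pochhammer symbol `(a; q)_∞`. -/
noncomputable def qPochhammer (a q : 𝕜) : 𝕜 := ∏' n : ℕ, (1 - a * q ^ n)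

/-- Euler's function `(q; q)_∞`, in which the products below are expressed. -/
noncomputable def eulerFun (q : 𝕜) : 𝕜 := qPochhammer q q

lemma eulerFun_eq_tprod (q : 𝕜) : eulerFun q = ∏' n : ℕ, (1 - q ^ (n + 1)) := by
  simp_rw [eulerFun, qPochhammer, pow_succ']

lemma norm_pow_lt_one (hq : ‖q‖ < 1) {n : ℕ} (hn : n ≠ 0) : ‖q ^ n‖ < 1 := by
  rw [norm_pow]
  exact pow_lt_one₀ (norm_nonneg _) hq hn

lemma pow_succ_ne_one_of_norm_lt_one (hq : ‖q‖ < 1) (n : ℕ) : q ^ (n + 1) ≠ 1 := fun h ↦ by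
  simpa [h] using norm_pow_lt_one hq n.succ_ne_zero

lemma summable_norm_neg_mul_pow (hq : ‖q‖ < 1) (a : 𝕜) : Summable fun n : ℕ ↦ ‖-(a * q ^ n)‖ := by
  simpa using (summable_geometric_of_lt_one (norm_nonneg q) hq).mul_left ‖a‖

variable [CompleteSpace 𝕜]

lemma multipliable_one_sub_mul_pow (hq : ‖q‖ < 1) (a : 𝕜) :
    Multipliable fun n : ℕ ↦ 1 - a * q ^ n := by
  simpa only [sub_eq_add_neg] using
    multipliable_one_add_of_summable (summable_norm_neg_mul_pow hq a)

lemma qPochhammer_ne_zero (hq : ‖q‖ < 1) {a : 𝕜} (ha : ∀ n : ℕ, a * q ^ n ≠ 1) :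
    qPochhammer a q ≠ 0 := by
  simpa only [qPochhammer, sub_eq_add_neg] using tprod_one_add_ne_zero_of_summable
    (fun n ↦ by simpa only [← sub_eq_add_neg, sub_ne_zero] using (ha n).symm)
    (summable_norm_neg_mul_pow hq a)

lemma qPochhammer_eq_one_sub_mul (hq : ‖q‖ < 1) (a : 𝕜) :
    qPochhammer a q = (1 - a) * qPochhammer (a * q) q := by
  have hshift : (fun n : ℕ ↦ 1 - a * q ^ (n + 1)) = fun n ↦ 1 - a * q * q ^ n := by
    ext n
    ring
  rw [qPochhammer, tprod_eq_zero_mul' (hshift ▸ multipliable_one_sub_mul_pow hq (a * q)), hshift,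
    pow_zero, mul_one, qPochhammer]

lemma qPochhammer_neg_mul (hq : ‖q‖ < 1) (a : 𝕜) :
    qPochhammer (-a) q * qPochhammer a q = qPochhammer (a ^ 2) (q ^ 2) := by
  rw [qPochhammer, qPochhammer, ← (multipliable_one_sub_mul_pow hq _).tprod_mul
    (multipliable_one_sub_mul_pow hq _), qPochhammer]
  congr! 2 with n
  ring

lemma qPochhammer_eq_prod_range (hq : ‖q‖ < 1) (a : 𝕜) {m : ℕ} (hm : m ≠ 0) :
    qPochhammer a q = ∏ i ∈ range m, qPochhammer (a * q ^ i) (q ^ m) := by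
  have : NeZero m := ⟨hm⟩
  let e : Fin m × ℕ ≃ ℕ := (Equiv.prodComm _ _).trans (Nat.divModEquiv m).symm
  have he (i : Fin m) (n : ℕ) : a * q ^ e (i, n) = a * q ^ (i : ℕ) * (q ^ m) ^ n := by
    simp only [e, Nat.divModEquiv, Equiv.trans_apply, Equiv.prodComm_apply, Equiv.coe_fn_symm_mk,
      Prod.fst_swap, Prod.snd_swap]
    ring
  have hfiber (i : Fin m) : HasProd (fun n ↦ 1 - a * q ^ e (i, n))
      (qPochhammer (a * q ^ (i : ℕ)) (q ^ m)) := by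
    simpa only [he, qPochhammer] using
      (multipliable_one_sub_mul_pow (norm_pow_lt_one hq hm) _).hasProd
  have hprod :=
    (e.hasProd_iff.mpr (multipliable_one_sub_mul_pow hq a).hasProd).prod_fiberwise hfiber
  rw [prod_range, qPochhammer, hprod.unique (hasProd_fintype _)]

lemma eulerFun_ne_zero (hq : ‖q‖ < 1) : eulerFun q ≠ 0 :=
  qPochhammer_ne_zero hq fun n ↦ by simpa only [pow_succ'] using pow_succ_ne_one_of_norm_lt_one hq n

lemma eulerFun_pow_ne_zero (hq : ‖q‖ < 1) {n : ℕ} (hn : n ≠ 0) : eulerFun (q ^ n) ≠ 0 :=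
  eulerFun_ne_zero (norm_pow_lt_one hq hn)

lemma qPochhammer_self_sq (hq : ‖q‖ < 1) :
    qPochhammer q (q ^ 2) = eulerFun q / eulerFun (q ^ 2) := by
  rw [eq_div_iff (eulerFun_pow_ne_zero hq two_ne_zero), eulerFun, eulerFun,
    qPochhammer_eq_prod_range hq q two_ne_zero]
  simp [prod_range_succ, ← pow_two]

lemma qPochhammer_neg_self (hq : ‖q‖ < 1) :
    qPochhammer (-q) q = eulerFun (q ^ 2) / eulerFun q := by
  rw [eq_div_iff (eulerFun_ne_zero hq), eulerFun, qPochhammer_neg_mul hq, eulerFun]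

lemma qPochhammer_neg_one (hq : ‖q‖ < 1) :
    qPochhammer (-1) q = 2 * (eulerFun (q ^ 2) / eulerFun q) := by
  rw [qPochhammer_eq_one_sub_mul hq, neg_one_mul, qPochhammer_neg_self hq]
  norm_num

lemma qPochhammer_mul_self_pow_six (hq : ‖q‖ < 1) :
    qPochhammer q (q ^ 6) * qPochhammer (q ^ 5) (q ^ 6) =
      eulerFun q * eulerFun (q ^ 6) / (eulerFun (q ^ 2) * eulerFun (q ^ 3)) := by
  have h2 := eulerFun_pow_ne_zero hq two_ne_zero
  have h3 := eulerFun_pow_ne_zero hq three_ne_zero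
  have h6 := eulerFun_pow_ne_zero hq (by simp : 6 ≠ 0)
  have hsplit := qPochhammer_eq_prod_range (norm_pow_lt_one hq two_ne_zero) q three_ne_zero
  have hcube := qPochhammer_self_sq (norm_pow_lt_one hq three_ne_zero)
  simp only [prod_range_succ, prod_range_zero, ← pow_mul, ← pow_succ', qPochhammer_self_sq hq,
    mul_one, one_mul, Nat.reduceMul, Nat.reduceAdd] at hsplit hcube
  rw [hcube] at hsplit
  field_simp at hsplit ⊢
  exact hsplit.symm

lemma tprod_cubicCF (hq : ‖q‖ < 1) :
    ∏' n : ℕ, ((1 - q ^ (6 * (n + 1) - 1)) * (1 - q ^ (6 * (n + 1) - 5)) /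
        (1 - q ^ (6 * (n + 1) - 3)) ^ 2) =
      eulerFun q * eulerFun (q ^ 6) ^ 3 / (eulerFun (q ^ 2) * eulerFun (q ^ 3) ^ 3) := by
  have h3 := eulerFun_pow_ne_zero hq three_ne_zero
  have h6 := eulerFun_pow_ne_zero hq (by simp : 6 ≠ 0)
  have hmul (a : 𝕜) := multipliable_one_sub_mul_pow (norm_pow_lt_one hq (by simp : 6 ≠ 0)) a
  have hcube : qPochhammer (q ^ 3) (q ^ 6) = eulerFun (q ^ 3) / eulerFun (q ^ 6) := by
    simpa only [← pow_mul] using qPochhammer_self_sq (norm_pow_lt_one hq three_ne_zero)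
  have hden : ∏' n, (1 - q ^ 3 * (q ^ 6) ^ n) ^ 2 = (eulerFun (q ^ 3) / eulerFun (q ^ 6)) ^ 2 := by
    rw [(hmul _).tprod_pow, ← hcube, qPochhammer]
  have hfactor (n : ℕ) :
      (1 - q ^ (6 * (n + 1) - 1)) * (1 - q ^ (6 * (n + 1) - 5)) / (1 - q ^ (6 * (n + 1) - 3)) ^ 2 =
        (1 - q * (q ^ 6) ^ n) * (1 - q ^ 5 * (q ^ 6) ^ n) / (1 - q ^ 3 * (q ^ 6) ^ n) ^ 2 := by
    rw [show 6 * (n + 1) - 1 = 6 * n + 5 by lia, show 6 * (n + 1) - 5 = 6 * n + 1 by lia,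
      show 6 * (n + 1) - 3 = 6 * n + 3 by lia]
    ring
  rw [tprod_congr hfactor, Multipliable.tprod_div₀ ((hmul _).mul (hmul _)) ((hmul _).pow 2)
    (by rw [hden]; positivity), (hmul _).tprod_mul (hmul _), hden, ← qPochhammer, ← qPochhammer,
    qPochhammer_mul_self_pow_six hq]
  field_simp

lemma qPochhammer_neg_mul_neg_sq_cube (hq : ‖q‖ < 1) :
    qPochhammer (-q) (q ^ 3) * qPochhammer (-q ^ 2) (q ^ 3) =
      eulerFun (q ^ 2) * eulerFun (q ^ 3) / (eulerFun q * eulerFun (q ^ 6)) := by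
  have h1 := eulerFun_ne_zero hq
  have h3 := eulerFun_pow_ne_zero hq three_ne_zero
  have h6 := eulerFun_pow_ne_zero hq (by simp : 6 ≠ 0)
  have hsplit := qPochhammer_eq_prod_range hq (-q) three_ne_zero
  have hcube := qPochhammer_neg_self (norm_pow_lt_one hq three_ne_zero)
  simp only [prod_range_succ, prod_range_zero, neg_mul, ← pow_mul, ← pow_succ',
    qPochhammer_neg_self hq, pow_one, one_mul, Nat.reduceMul, Nat.reduceAdd] at hsplit hcube
  rw [hcube] at hsplit
  field_simp at hsplit ⊢
  exact hsplit.symm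

end QPochhammer

section ThetaSeries

variable {𝕜 : Type*} [NormedField 𝕜]

lemma summable_norm_pow_sq_mul_pow {x : 𝕜} (hx : ‖x‖ < 1) (z : 𝕜) :
    Summable fun n : ℕ ↦ ‖x ^ n ^ 2 * z ^ n‖ := by
  have hlim : Tendsto (fun n : ℕ ↦ ‖x ^ n * z‖) atTop (𝓝 0) := by
    simpa using ((tendsto_pow_atTop_nhds_zero_of_norm_lt_one hx).mul_const z).norm
  refine summable_geometric_two.of_norm_bounded_eventually_nat ?_
  filter_upwards [hlim.eventually_le_const one_half_pos] with n hn
  rw [norm_norm, sq, pow_mul, ← mul_pow, norm_pow]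
  exact pow_le_pow_left₀ (norm_nonneg _) hn n

lemma summable_norm_zpow_sq_mul_zpow {x : 𝕜} (hx : ‖x‖ < 1) (z : 𝕜) :
    Summable fun j : ℤ ↦ ‖x ^ j ^ 2 * z ^ j‖ := by
  refine .of_nat_of_neg ?_ ?_
  · exact_mod_cast summable_norm_pow_sq_mul_pow hx z
  · simpa only [neg_sq, zpow_neg, ← inv_zpow] using
      mod_cast summable_norm_pow_sq_mul_pow hx z⁻¹

/-- Jacobi's theta series in multiplicative variables: `x = exp (πiτ)`, `z = exp (2πiv)` for
`θ(v, τ)`. -/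
noncomputable def thetaSeries (x z : 𝕜) : 𝕜 := ∑' j : ℤ, x ^ j ^ 2 * z ^ j

lemma thetaSeries_inv (x z : 𝕜) : thetaSeries x z⁻¹ = thetaSeries x z := by
  rw [thetaSeries, thetaSeries, ← (Equiv.neg ℤ).tsum_eq]
  simp

lemma thetaSeries_sq_mul {x z : 𝕜} (hx : x ≠ 0) (hz : z ≠ 0) :
    thetaSeries x (x ^ 2 * z) = (x * z)⁻¹ * thetaSeries x z := by
  rw [thetaSeries, thetaSeries, ← (Equiv.addRight (1 : ℤ)).tsum_eq fun j ↦ x ^ j ^ 2 * z ^ j,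
    ← tsum_mul_left]
  congr! 2 with j
  simp only [Equiv.coe_addRight]
  rw [zpow_add_one_sq hx, zpow_add_one₀ hz, mul_zpow]
  field_simp

variable [CompleteSpace 𝕜]

theorem thetaSeries_eq_sum_range {x z : 𝕜} (hx : ‖x‖ < 1) (hx0 : x ≠ 0) (hz : z ≠ 0) {m : ℕ}
    (hm : m ≠ 0) :
    thetaSeries x z = ∑ i ∈ range m,
      x ^ i ^ 2 * z ^ i * thetaSeries (x ^ m ^ 2) (x ^ (2 * m * i) * z ^ m) := by
  have : NeZero m := ⟨hm⟩
  let e : Fin m × ℤ ≃ ℤ := (Equiv.prodComm _ _).trans (Int.divModEquiv m).symm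
  have he (i : Fin m) (k : ℤ) : x ^ e (i, k) ^ 2 * z ^ e (i, k) = x ^ (i : ℕ) ^ 2 * z ^ (i : ℕ) *
      ((x ^ m ^ 2) ^ k ^ 2 * (x ^ (2 * m * i) * z ^ m) ^ k) := by
    simp only [e, Int.divModEquiv, Equiv.trans_apply, Equiv.prodComm_apply, Equiv.coe_fn_symm_mk,
      Prod.fst_swap, Prod.snd_swap]
    rw [mul_comm k (m : ℤ), show (m * k + i : ℤ) ^ 2 =
      (i ^ 2 : ℕ) + ((m ^ 2 : ℕ) * k ^ 2 + (2 * m * i : ℕ) * k) by push_cast; ring]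
    simp only [zpow_add₀ hx0, zpow_add₀ hz, zpow_mul, mul_zpow, zpow_natCast]
    ring
  have hfiber (i : Fin m) : HasSum (fun k ↦ x ^ e (i, k) ^ 2 * z ^ e (i, k))
      (x ^ (i : ℕ) ^ 2 * z ^ (i : ℕ) *
        thetaSeries (x ^ m ^ 2) (x ^ (2 * m * i) * z ^ m)) := by
    simpa only [he, thetaSeries] using (summable_norm_zpow_sq_mul_zpow
      (norm_pow_lt_one hx (pow_ne_zero 2 hm)) _).of_norm.hasSum.mul_left _
  have hsum := (e.hasSum_iff.mpr
    (summable_norm_zpow_sq_mul_zpow hx z).of_norm.hasSum).prod_fiberwise hfiber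
  rw [sum_range, thetaSeries, hsum.unique (hasSum_fintype _)]

lemma thetaSeries_trisection {x z : 𝕜} (hx : ‖x‖ < 1) (hx0 : x ≠ 0) (hz : z ≠ 0) :
    thetaSeries x z = thetaSeries (x ^ 9) (z ^ 3) + x * z * thetaSeries (x ^ 9) (x ^ 6 * z ^ 3) +
      x * z⁻¹ * thetaSeries (x ^ 9) (x ^ 6 * z⁻¹ ^ 3) := by
  have hshift : x ^ 12 * z ^ 3 = (x ^ 9) ^ 2 * (x ^ 6 * z⁻¹ ^ 3)⁻¹ := by
    field_simp
  rw [thetaSeries_eq_sum_range hx hx0 hz three_ne_zero]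
  simp only [sum_range_succ, sum_range_zero, Nat.reduceMul, Nat.reducePow, pow_zero, pow_one,
    one_mul, zero_add, mul_one, mul_zero]
  rw [hshift, thetaSeries_sq_mul (by positivity) (by positivity), thetaSeries_inv]
  field_simp

end ThetaSeries

section JacobiTripleProduct

variable {𝕜 : Type*} [NormedField 𝕜] [CompleteSpace 𝕜] {q x z : 𝕜}

lemma tendsto_prod_range_eulerFun (hq : ‖q‖ < 1) :
    Tendsto (fun n ↦ ∏ k ∈ range n, (1 - q ^ (k + 1))) atTop (𝓝 (eulerFun q)) := by
  simpa only [← pow_succ', eulerFun, qPochhammer] using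
    (multipliable_one_sub_mul_pow hq q).hasProd.tendsto_prod_nat

lemma tendsto_invQPochhammer (hq : ‖q‖ < 1) :
    Tendsto (invQPochhammer q) atTop (𝓝 (eulerFun q)⁻¹) := by
  rw [← Nat.map_cast_int_atTop, tendsto_map'_iff]
  exact (tendsto_prod_range_eulerFun hq).inv₀ (eulerFun_ne_zero hq)

lemma tendsto_centralQBinom (hq : ‖q‖ < 1) (j : ℤ) :
    Tendsto (fun N ↦ centralQBinom q N j) atTop (𝓝 (eulerFun q)⁻¹) := by
  have hadd (i : ℤ) : Tendsto (fun N : ℕ ↦ invQPochhammer q (N + i)) atTop (𝓝 (eulerFun q)⁻¹) :=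
    (tendsto_invQPochhammer hq).comp
      (tendsto_atTop_add_const_right _ i tendsto_natCast_atTop_atTop)
  have hprod := (tendsto_prod_range_eulerFun hq).comp
    (tendsto_id.const_mul_atTop' (two_pos : (0 : ℕ) < 2))
  simpa [centralQBinom, sub_eq_add_neg, eulerFun_ne_zero hq] using
    hprod.mul ((hadd j).mul (hadd (-j)))

lemma exists_norm_invQPochhammer_le (hq : ‖q‖ < 1) : ∃ C, ∀ n, ‖invQPochhammer q n‖ ≤ C := by
  have hlim := (tendsto_invQPochhammer hq).comp tendsto_natCast_atTop_atTop
  obtain ⟨C, hC⟩ := (Metric.isBounded_range_of_tendsto _ hlim).exists_norm_le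
  refine ⟨C, fun n ↦ ?_⟩
  obtain hn | hn := le_or_gt 0 n
  · lift n to ℕ using hn
    exact hC _ ⟨n, rfl⟩
  · simpa [invQPochhammer_of_neg q hn] using (norm_nonneg _).trans (hC _ ⟨0, rfl⟩)

lemma exists_norm_centralQBinom_le (hq : ‖q‖ < 1) : ∃ C, ∀ N j, ‖centralQBinom q N j‖ ≤ C := by
  obtain ⟨C, hC⟩ := (Metric.isBounded_range_of_tendsto _
    (tendsto_prod_range_eulerFun hq)).exists_norm_le
  obtain ⟨D, hD⟩ := exists_norm_invQPochhammer_le hq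
  have hC0 : 0 ≤ C := (norm_nonneg _).trans (hC _ ⟨0, rfl⟩)
  have hD0 : 0 ≤ D := (norm_nonneg _).trans (hD 0)
  refine ⟨C * (D * D), fun N j ↦ ?_⟩
  rw [centralQBinom, norm_mul, norm_mul]
  gcongr
  exacts [hC _ ⟨2 * N, rfl⟩, hD _, hD _]

theorem jacobi_triple_product (hx : ‖x‖ < 1) (hx0 : x ≠ 0) (hz : z ≠ 0) :
    thetaSeries x z = eulerFun (x ^ 2) *
      (qPochhammer (-(x * z)) (x ^ 2) * qPochhammer (-(x * z⁻¹)) (x ^ 2)) := by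
  have hx2 := norm_pow_lt_one hx two_ne_zero
  obtain ⟨C, hC⟩ := exists_norm_centralQBinom_le hx2
  have hsum : Tendsto (fun N ↦ ∑' j : ℤ, centralQBinom (x ^ 2) N j * (x ^ j ^ 2 * z ^ j)) atTop
      (𝓝 (∑' j : ℤ, (eulerFun (x ^ 2))⁻¹ * (x ^ j ^ 2 * z ^ j))) :=
    tendsto_tsum_of_dominated_convergence ((summable_norm_zpow_sq_mul_zpow hx z).mul_left C)
      (fun j ↦ (tendsto_centralQBinom hx2 j).mul_const _)
      (.of_forall fun N j ↦ (norm_mul_le _ _).trans (by gcongr; exact hC N j))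
  have hprod : Tendsto (fun N ↦ ∏ k ∈ range N,
      (1 + x * z * (x ^ 2) ^ k) * (1 + x * z⁻¹ * (x ^ 2) ^ k)) atTop
      (𝓝 (qPochhammer (-(x * z)) (x ^ 2) * qPochhammer (-(x * z⁻¹)) (x ^ 2))) := by
    simpa [qPochhammer] using ((multipliable_one_sub_mul_pow hx2 (-(x * z))).hasProd.mul
      (multipliable_one_sub_mul_pow hx2 (-(x * z⁻¹))).hasProd).tendsto_prod_nat
  simp_rw [(hasSum_centralQBinom (pow_succ_ne_one_of_norm_lt_one hx2) hx0 hz _).tsum_eq,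
    tsum_mul_left] at hsum
  rw [← tendsto_nhds_unique hsum hprod, thetaSeries,
    mul_inv_cancel_left₀ (eulerFun_ne_zero hx2)]

lemma thetaSeries_neg_one (hx : ‖x‖ < 1) (hx0 : x ≠ 0) :
    thetaSeries x (-1) = eulerFun x ^ 2 / eulerFun (x ^ 2) := by
  have h2 := eulerFun_pow_ne_zero hx two_ne_zero
  rw [jacobi_triple_product hx hx0 (by simp), inv_neg, inv_one, mul_neg_one, neg_neg,
    qPochhammer_self_sq hx]
  field_simp

lemma thetaSeries_self (hx : ‖x‖ < 1) (hx0 : x ≠ 0) :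
    thetaSeries x x = 2 * (eulerFun (x ^ 4) ^ 2 / eulerFun (x ^ 2)) := by
  have hx2 := norm_pow_lt_one hx two_ne_zero
  have h2 := eulerFun_ne_zero hx2
  rw [jacobi_triple_product hx hx0 hx0, mul_inv_cancel₀ hx0, ← pow_two, qPochhammer_neg_self hx2,
    qPochhammer_neg_one hx2, ← pow_mul]
  field_simp

lemma thetaSeries_cube_neg_sq (hx : ‖x‖ < 1) (hx0 : x ≠ 0) :
    thetaSeries (x ^ 3) (-x ^ 2) =
      eulerFun x * eulerFun (x ^ 6) ^ 2 / (eulerFun (x ^ 2) * eulerFun (x ^ 3)) := by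
  have hinv : x ^ 3 * (-x ^ 2)⁻¹ = -x := by
    field_simp
  rw [jacobi_triple_product (norm_pow_lt_one hx three_ne_zero) (by positivity) (by simpa), hinv,
    mul_neg, neg_neg, neg_neg, ← pow_mul, ← pow_add, mul_comm (qPochhammer _ _),
    qPochhammer_mul_self_pow_six hx]
  ring

lemma thetaSeries_cube_self (hx : ‖x‖ < 1) (hx0 : x ≠ 0) :
    thetaSeries (x ^ 3) x =
      eulerFun (x ^ 4) * eulerFun (x ^ 6) ^ 2 / (eulerFun (x ^ 2) * eulerFun (x ^ 12)) := by
  have hinv : x ^ 3 * x⁻¹ = x ^ 2 := by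
    field_simp
  have hprod := qPochhammer_neg_mul_neg_sq_cube (norm_pow_lt_one hx two_ne_zero)
  simp only [← pow_mul, Nat.reduceMul] at hprod
  rw [jacobi_triple_product (norm_pow_lt_one hx three_ne_zero) (by positivity) hx0, hinv,
    ← pow_succ, ← pow_mul, mul_comm (qPochhammer _ _), hprod]
  ring

end JacobiTripleProduct

section CubicDissection

variable {𝕜 : Type*} [NormedField 𝕜] [CompleteSpace 𝕜] {q : 𝕜}

theorem phi_trisection (hq : ‖q‖ < 1) (hq0 : q ≠ 0) :
    eulerFun q ^ 2 / eulerFun (q ^ 2) = eulerFun (q ^ 9) ^ 2 / eulerFun (q ^ 18) -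
      2 * q * (eulerFun (q ^ 3) * eulerFun (q ^ 18) ^ 2 /
        (eulerFun (q ^ 6) * eulerFun (q ^ 9))) := by
  have htheta := thetaSeries_trisection hq hq0 (neg_ne_zero.mpr one_ne_zero)
  have hcube := thetaSeries_cube_neg_sq (norm_pow_lt_one hq three_ne_zero) (by positivity)
  have hnine := thetaSeries_neg_one (norm_pow_lt_one hq (by simp : 9 ≠ 0)) (by positivity)
  simp only [← pow_mul, Nat.reduceMul] at hcube hnine
  rw [thetaSeries_neg_one hq hq0, inv_neg, inv_one, Odd.neg_one_pow (by decide), mul_neg_one,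
    mul_neg_one, hnine, hcube] at htheta
  linear_combination htheta

theorem psi_trisection [NeZero (2 : 𝕜)] (hq : ‖q‖ < 1) (hq0 : q ≠ 0) (hsq : IsSquare q) :
    eulerFun (q ^ 2) ^ 2 / eulerFun q =
      eulerFun (q ^ 6) * eulerFun (q ^ 9) ^ 2 / (eulerFun (q ^ 3) * eulerFun (q ^ 18)) +
        q * (eulerFun (q ^ 18) ^ 2 / eulerFun (q ^ 9)) := by
  -- `2 ψ(x ^ 2)` is the theta series at `(x, x)`, since `2 * (j * (j + 1) / 2) = j ^ 2 + j`.
  obtain ⟨x, rfl⟩ := hsq.exists_sq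
  have hx : ‖x‖ < 1 := by simpa [norm_pow, sq_lt_one_iff₀] using hq
  have hx0 : x ≠ 0 := by simpa using hq0
  have htheta := thetaSeries_trisection hx hx0 hx0
  have hcube := thetaSeries_cube_self (norm_pow_lt_one hx three_ne_zero) (by positivity)
  have hnine := thetaSeries_self (norm_pow_lt_one hx (by simp : 9 ≠ 0)) (by positivity)
  have hinv : x ^ 6 * x⁻¹ ^ 3 = x ^ 3 := by field_simp
  simp only [← pow_mul, Nat.reduceMul] at hcube hnine ⊢
  rw [thetaSeries_self hx hx0, ← pow_add, hinv, mul_inv_cancel₀ hx0, hnine, hcube] at htheta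
  apply mul_left_cancel₀ (two_ne_zero (α := 𝕜))
  linear_combination htheta

/-- Ramanujan's cubic continued fraction as a quotient of Euler functions in the variable
`q = exp (2πiτ / 3)`, the cube root of the nome of `τ`. -/
noncomputable def cubicQuotient (q : 𝕜) : 𝕜 :=
  q * (eulerFun (q ^ 3) * eulerFun (q ^ 18) ^ 3 / (eulerFun (q ^ 6) * eulerFun (q ^ 9) ^ 3))

lemma one_sub_two_mul_cubicQuotient (hq : ‖q‖ < 1) (hq0 : q ≠ 0) :
    1 - 2 * cubicQuotient q =
      eulerFun q ^ 2 / eulerFun (q ^ 2) * (eulerFun (q ^ 18) / eulerFun (q ^ 9) ^ 2) := by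
  have h9 := eulerFun_pow_ne_zero hq (by simp : 9 ≠ 0)
  have h18 := eulerFun_pow_ne_zero hq (by simp : 18 ≠ 0)
  rw [phi_trisection hq hq0, cubicQuotient]
  field_simp

lemma one_add_cubicQuotient [NeZero (2 : 𝕜)] (hq : ‖q‖ < 1) (hq0 : q ≠ 0) (hsq : IsSquare q) :
    1 + cubicQuotient q = eulerFun (q ^ 2) ^ 2 / eulerFun q *
      (eulerFun (q ^ 3) * eulerFun (q ^ 18) / (eulerFun (q ^ 6) * eulerFun (q ^ 9) ^ 2)) := by
  have h3 := eulerFun_pow_ne_zero hq three_ne_zero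
  have h6 := eulerFun_pow_ne_zero hq (by simp : 6 ≠ 0)
  have h9 := eulerFun_pow_ne_zero hq (by simp : 9 ≠ 0)
  have h18 := eulerFun_pow_ne_zero hq (by simp : 18 ≠ 0)
  rw [psi_trisection hq hq0 hsq, cubicQuotient]
  field_simp

theorem one_add_cubicQuotient_mul [NeZero (2 : 𝕜)] (hq : ‖q‖ < 1) (hq0 : q ≠ 0)
    (hsq : IsSquare q) :
    (1 + cubicQuotient q) *
        (eulerFun q ^ 3 * eulerFun (q ^ 6) / (eulerFun (q ^ 2) ^ 3 * eulerFun (q ^ 3))) =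
      1 - 2 * cubicQuotient q := by
  have h1 := eulerFun_ne_zero hq
  have h2 := eulerFun_pow_ne_zero hq two_ne_zero
  have h3 := eulerFun_pow_ne_zero hq three_ne_zero
  have h6 := eulerFun_pow_ne_zero hq (by simp : 6 ≠ 0)
  rw [one_add_cubicQuotient hq hq0 hsq, one_sub_two_mul_cubicQuotient hq hq0]
  field_simp

end CubicDissection

section Modularity

open ModularForm

variable {τ : ℂ}

lemma norm_nome_lt_one (hτ : 0 < τ.im) : ‖nome τ‖ < 1 :=
  UpperHalfPlane.norm_exp_two_pi_I_lt_one ⟨τ, hτ⟩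

lemma nome_ne_zero (τ : ℂ) : nome τ ≠ 0 := exp_ne_zero _

lemma nome_pow_of_mul_eq {σ : ℂ} {n : ℕ} (h : n * σ = τ) : nome σ ^ n = nome τ := by
  rw [nome, nome, ← exp_nat_mul, ← h]
  ring_nf

lemma c_eq_eulerFun (hτ : 0 < τ.im) :
    c τ = nome (τ / 3) * (eulerFun (nome τ) * eulerFun (nome τ ^ 6) ^ 3 /
      (eulerFun (nome τ ^ 2) * eulerFun (nome τ ^ 3) ^ 3)) := by
  rw [c, tprod_cubicCF (norm_nome_lt_one hτ), mul_div_assoc, ← nome]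

lemma c_eq_cubicQuotient (hτ : 0 < τ.im) : c τ = cubicQuotient (nome (τ / 3)) := by
  have hcube : nome (τ / 3) ^ 3 = nome τ := nome_pow_of_mul_eq (by push_cast; ring)
  rw [c_eq_eulerFun hτ, cubicQuotient, ← hcube]
  simp only [← pow_mul, Nat.reduceMul]

lemma eta_natCast_mul (n : ℕ) (τ : ℂ) :
    η (n * τ) = nome (τ / 24) ^ n * eulerFun (nome τ ^ n) := by
  rw [nome_pow_of_mul_eq (mul_div_assoc _ _ _).symm, nome_pow_of_mul_eq rfl, eulerFun_eq_tprod]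
  simp [ModularForm.eta, eta_q, nome, Function.Periodic.qParam, mul_div_assoc]

lemma c_eq_eta (hτ : 0 < τ.im) :
    c τ = η τ * η (6 * τ) ^ 3 / (η (2 * τ) * η (3 * τ) ^ 3) := by
  have h1 := eta_natCast_mul 1 τ
  have h2 := eta_natCast_mul 2 τ
  have h3 := eta_natCast_mul 3 τ
  have h6 := eta_natCast_mul 6 τ
  have hpow : nome (τ / 24) ^ 8 = nome (τ / 3) := nome_pow_of_mul_eq (by push_cast; ring)
  have hne := nome_ne_zero (τ / 24)
  push_cast [one_mul, pow_one] at h1 h2 h3 h6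
  rw [c_eq_eulerFun hτ, ← hpow, h1, h2, h3, h6]
  field_simp

lemma sqrt_ofReal_mul {r : ℝ} (hr : 0 < r) {z : ℂ} (hz : z ≠ 0) :
    sqrt (r * z) = √r * sqrt z := by
  have hr0 : (r : ℂ) ≠ 0 := by exact_mod_cast hr.ne'
  rw [sqrt_eq_exp (mul_ne_zero hr0 hz), sqrt_eq_exp hz, log_ofReal_mul hr hz, add_div, exp_add,
    Real.sqrt_eq_rpow, Real.rpow_def_of_pos hr]
  push_cast
  ring_nf

lemma eta_neg_one_div_ofReal_mul (hτ : 0 < τ.im) {r : ℝ} (hr : 0 < r) :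
    η (-1 / (r * τ)) = √r * ((sqrt I)⁻¹ * sqrt τ) * η (r * τ) := by
  have hτ0 : τ ≠ 0 := UpperHalfPlane.ne_zero ⟨τ, hτ⟩
  have heta := eta_comp_eq_csqrt_I_inv (x := r * τ) (by simpa using mul_pos hr hτ)
  simp only [Function.comp_apply, Pi.smul_apply, Pi.mul_apply, smul_eq_mul,
    sqrt_ofReal_mul hr hτ0] at heta
  rw [heta]
  ring

lemma sqrt_ne_zero {z : ℂ} (hz : z ≠ 0) : sqrt z ≠ 0 := by
  rw [sqrt_eq_exp hz]
  exact exp_ne_zero _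

lemma im_neg_one_div_pos (hτ : 0 < τ.im) : 0 < (-1 / τ).im := by
  simpa [neg_div, ← inv_neg] using UpperHalfPlane.im_inv_neg_coe_pos ⟨τ, hτ⟩

lemma c_neg_one_div_six_mul_eq_eta (hτ : 0 < τ.im) :
    c (-1 / (6 * τ)) = η τ ^ 3 * η (6 * τ) / (2 * (η (2 * τ) ^ 3 * η (3 * τ))) := by
  have hτ0 : τ ≠ 0 := UpperHalfPlane.ne_zero ⟨τ, hτ⟩
  have h1 := eta_neg_one_div_ofReal_mul hτ one_pos
  have h2 := eta_neg_one_div_ofReal_mul hτ two_pos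
  have h3 := eta_neg_one_div_ofReal_mul hτ three_pos
  have h6 := eta_neg_one_div_ofReal_mul hτ (by norm_num : (0 : ℝ) < 6)
  have hI := sqrt_ne_zero I_ne_zero
  have hsqrtτ := sqrt_ne_zero hτ0
  have hsqrt2 : ((√2 : ℝ) : ℂ) ^ 2 = 2 := by norm_cast; simp
  have hsqrt6 : ((√6 : ℝ) : ℂ) = (√2 : ℝ) * (√3 : ℝ) := by
    rw [← ofReal_mul, ← Real.sqrt_mul zero_le_two]
    norm_num
  have hsqrt2_ne : ((√2 : ℝ) : ℂ) ≠ 0 := by simp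
  have hsqrt3_ne : ((√3 : ℝ) : ℂ) ≠ 0 := by simp
  push_cast at h1 h2 h3 h6
  rw [c_eq_eta (im_neg_one_div_pos (by simpa using hτ)),
    show 6 * (-1 / (6 * τ)) = -1 / (1 * τ) by field_simp,
    show 2 * (-1 / (6 * τ)) = -1 / (3 * τ) by field_simp; norm_num,
    show 3 * (-1 / (6 * τ)) = -1 / (2 * τ) by field_simp; norm_num,
    h1, h2, h3, h6, hsqrt6, Real.sqrt_one, ofReal_one, one_mul, one_mul]
  field_simp
  rw [hsqrt2]
  ring

lemma c_neg_one_div_six_mul (hτ : 0 < τ.im) :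
    c (-1 / (6 * τ)) = eulerFun (nome τ) ^ 3 * eulerFun (nome τ ^ 6) /
      (2 * (eulerFun (nome τ ^ 2) ^ 3 * eulerFun (nome τ ^ 3))) := by
  have h1 := eta_natCast_mul 1 τ
  have h2 := eta_natCast_mul 2 τ
  have h3 := eta_natCast_mul 3 τ
  have h6 := eta_natCast_mul 6 τ
  have hne := nome_ne_zero (τ / 24)
  push_cast [one_mul, pow_one] at h1 h2 h3 h6
  rw [c_neg_one_div_six_mul_eq_eta hτ, h1, h2, h3, h6]
  field_simp

end Modularity

/-- For `τ` in the upper half-plane, `(1 + c(τ/2))·c(−1/τ) = 1/2 − c(τ/2)`. -/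
theorem cubicCF_inversion (τ : ℂ) (hτ : 0 < τ.im) :
    (1 + c (τ / 2)) * c (-1 / τ) = 1 / 2 - c (τ / 2) := by
  have hτ6 : 0 < (τ / 6).im := by simpa using hτ
  have hhalf : c (τ / 2) = cubicQuotient (nome (τ / 6)) := by
    rw [c_eq_cubicQuotient (by simpa using hτ)]
    ring_nf
  have hinv := c_neg_one_div_six_mul hτ6
  rw [mul_div_cancel₀ τ (by norm_num : (6 : ℂ) ≠ 0)] at hinv
  have hcubic := one_add_cubicQuotient_mul (norm_nome_lt_one hτ6) (nome_ne_zero _)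
    ((Complex.isSquare _))
  rw [hhalf, hinv]
  linear_combination hcubic / 2
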